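/- For every positive integer j, the limit lim_{m→∞} λ_j^{(m)} exists and equals β_j; that is, the j-th eigenvalue of the truncated matrix A_m converges, as m → ∞, to the j-th min-max value of the operator L = −Δ − V on the torus ℝ²/Γ. -/

import Mathlib

open MeasureTheory Filter Real

noncomputable section

/-- The Laplacian `Δf = f_xx + f_yy` on `ℝ²`. -/
def lap (f : ℝ × ℝ → ℝ) (z : ℝ × ℝ) : ℝ :=
  deriv (fun x => deriv (fun x' => f (x', z.2)) x) z.1 +
  deriv (fun y => deriv (fun y' => f (z.1, y')) y) z.2

/-- `f` is periodic with respect to the lattice `ℤv₁ + ℤv₂`. -/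
def LatPeriodic (v₁ v₂ : ℝ × ℝ) (f : ℝ × ℝ → ℝ) : Prop :=
  ∀ z : ℝ × ℝ, f (z + v₁) = f z ∧ f (z + v₂) = f z

/-- The fundamental parallelogram `{s v₁ + t v₂ : s, t ∈ [0,1)}`. -/
def fundDom (v₁ v₂ : ℝ × ℝ) : Set (ℝ × ℝ) :=
  {z | ∃ s t : ℝ, s ∈ Set.Ico (0:ℝ) 1 ∧ t ∈ Set.Ico (0:ℝ) 1 ∧ z = s • v₁ + t • v₂}

/-- The `L²` inner product over the fundamental domain. -/
def l2 (v₁ v₂ : ℝ × ℝ) (f g : ℝ × ℝ → ℝ) : ℝ :=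
  ∫ z in fundDom v₁ v₂, f z * g z

/-- The quadratic form of the operator `L = −Δ − V`. -/
def Qf (v₁ v₂ : ℝ × ℝ) (V : ℝ × ℝ → ℝ) (u : ℝ × ℝ → ℝ) : ℝ :=
  ∫ z in fundDom v₁ v₂, u z * (-(lap u z) - V z * u z)

/-- The set of smooth `Γ`-periodic functions. -/
def SmoothPer (v₁ v₂ : ℝ × ℝ) : Set (ℝ × ℝ → ℝ) :=
  {f | ContDiff ℝ (⊤ : ℕ∞) f ∧ LatPeriodic v₁ v₂ f}

/-- The min-max values `β_j` of `L = −Δ − V`. -/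
def minmax (v₁ v₂ : ℝ × ℝ) (V : ℝ × ℝ → ℝ) (j : ℕ) : ℝ :=
  sInf { c : ℝ | ∃ W : Submodule ℝ (ℝ × ℝ → ℝ),
    (W : Set (ℝ × ℝ → ℝ)) ⊆ SmoothPer v₁ v₂ ∧
    Module.finrank ℝ W = j ∧
    c = sSup { q : ℝ | ∃ φ ∈ W, l2 v₁ v₂ φ φ = 1 ∧ q = Qf v₁ v₂ V φ } }

/-- The truncated matrix `A_m` with entries `α_i δ_ij − b_ij`. -/
def Amat (v₁ v₂ : ℝ × ℝ) (V : ℝ × ℝ → ℝ) (u : ℕ → ℝ × ℝ → ℝ) (α : ℕ → ℝ) (m : ℕ) :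
    Matrix (Fin m) (Fin m) ℝ :=
  Matrix.of fun i j =>
    (if i = j then α i.1 else 0) - ∫ z in fundDom v₁ v₂, V z * u i.1 z * u j.1 z

/-
Both `β_j` and `λ_j^{(m)}` are min-max values of one symmetric form `⟪·, -Δ ·⟫ - ∫ V · ·`,
over all smooth periodic functions and over the trial space `U_m` spanned by `u_1, …, u_m`. Since
`U_m` is a space of admissible functions, `β_j ≤ λ_j^{(m)}` (Rayleigh–Ritz). Conversely, let
`a > β_j` and let `W` have dimension `j` with `Q < a ‖·‖²` on `W \ {0}`. The orthogonal projection
`P_m` onto `U_m` commutes with `-Δ`, because `U_m` is spanned by eigenfunctions, so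
`Q (P_m x) → Q x` for every `x` although `Q` is not `L²`-continuous. On the finite-dimensional `W`
this convergence is uniform over the unit sphere, so `Q (P_m x) < a ‖P_m x‖²` on `W \ {0}` for large
`m`; evaluating at some `x ∈ W` orthogonal to the first `j - 1` eigenvectors of `A_m` gives
`λ_j^{(m)} < a`.
-/

open scoped RealInnerProductSpace Topology Matrix Pointwise

section FiniteDimensionalForms

variable {E : Type*} [NormedAddCommGroup E] [NormedSpace ℝ E] [FiniteDimensional ℝ E]

theorem continuous_bilinForm_apply_self (B : LinearMap.BilinForm ℝ E) :
    Continuous fun x => B x x :=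
  B.toContinuousBilinearMap.continuous.clm_apply continuous_id

theorem tendsto_clm_of_forall_tendsto {F ι : Type*} [NormedAddCommGroup F] [NormedSpace ℝ F]
    {l : Filter ι} {Φ : ι → E →L[ℝ] F} {Ψ : E →L[ℝ] F}
    (h : ∀ x, Tendsto (fun i => Φ i x) l (𝓝 (Ψ x))) : Tendsto Φ l (𝓝 Ψ) := by
  let e : (E →L[ℝ] F) ≃L[ℝ] (Fin (Module.finrank ℝ E) → F) :=
    ((ContinuousLinearEquiv.ofFinrankEq (Module.finrank_fin_fun ℝ).symm).arrowCongr
      (1 : F ≃L[ℝ] F)).trans (ContinuousLinearEquiv.piRing _)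
  rw [e.toHomeomorph.isInducing.tendsto_nhds_iff, tendsto_pi_nhds]
  exact fun k => h _

theorem eventually_forall_neg_of_tendsto {ι : Type*} {l : Filter ι}
    {B : ι → LinearMap.BilinForm ℝ E} {C : LinearMap.BilinForm ℝ E}
    (hB : ∀ x y, Tendsto (fun i => B i x y) l (𝓝 (C x y)))
    (hC : ∀ x, x ≠ 0 → C x x < 0) : ∀ᶠ i in l, ∀ x, x ≠ 0 → B i x x < 0 := by
  have hlim : Tendsto (fun i => (B i).toContinuousBilinearMap) l
      (𝓝 C.toContinuousBilinearMap) :=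
    tendsto_clm_of_forall_tendsto fun x => tendsto_clm_of_forall_tendsto fun y => hB x y
  have hopen : ∀ᶠ Φ in 𝓝 C.toContinuousBilinearMap, ∀ x ∈ Metric.sphere (0 : E) 1, Φ x x < 0 :=
    (isCompact_sphere 0 1).eventually_forall_of_forall_eventually fun x hx => by
      have hx0 : x ≠ 0 := by rintro rfl; simp at hx
      have hcont : Continuous fun p : (E →L[ℝ] E →L[ℝ] ℝ) × E => p.1 p.2 p.2 := by fun_prop
      exact hcont.continuousAt.eventually_lt_const (hC x hx0)
  filter_upwards [hlim.eventually hopen] with i hi x hx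
  have hunit : B i (‖x‖⁻¹ • x) (‖x‖⁻¹ • x) < 0 := hi _ (by simp [norm_smul, hx])
  have hsq : B i (‖x‖⁻¹ • x) (‖x‖⁻¹ • x) = (‖x‖⁻¹) ^ 2 * B i x x := by
    simp only [map_smul, LinearMap.smul_apply, smul_eq_mul]; ring
  exact neg_of_mul_neg_right (hsq ▸ hunit) (by positivity)

end FiniteDimensionalForms

section RayleighSup

variable {H : Type*} [NormedAddCommGroup H] [InnerProductSpace ℝ H]

/-- The supremum of the form `B` over the unit sphere of the subspace `W`; by the conventions for
`sSup` it is `0` when `W = ⊥` and when `B` is unbounded there. -/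
def rayleighSup (B : LinearMap.BilinForm ℝ H) (W : Submodule ℝ H) : ℝ :=
  sSup {q | ∃ x ∈ W, ‖x‖ = 1 ∧ q = B x x}

/-- The `n`-th min-max value of the form `B`, with `n` counted from `1`. -/
def minMaxValue (B : LinearMap.BilinForm ℝ H) (n : ℕ) : ℝ :=
  sInf {c | ∃ W : Submodule ℝ H, Module.finrank ℝ W = n ∧ c = rayleighSup B W}

variable {B : LinearMap.BilinForm ℝ H} {W : Submodule ℝ H}

theorem bddAbove_form_unitSphere [FiniteDimensional ℝ W] :
    BddAbove {q | ∃ x ∈ W, ‖x‖ = 1 ∧ q = B x x} := by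
  have hcont : Continuous fun x : W => B x x :=
    continuous_bilinForm_apply_self (B.domRestrict₁₂ W W)
  refine ((isCompact_sphere (0 : W) 1).bddAbove_image hcont.continuousOn).mono ?_
  rintro _ ⟨x, hxW, hx, rfl⟩
  exact ⟨⟨x, hxW⟩, by simpa using hx, rfl⟩

theorem form_le_rayleighSup_mul_sq [FiniteDimensional ℝ W] {x : H} (hx : x ∈ W) :
    B x x ≤ rayleighSup B W * ‖x‖ ^ 2 := by
  rcases eq_or_ne x 0 with rfl | hx0
  · simp
  have hunit : B (‖x‖⁻¹ • x) (‖x‖⁻¹ • x) ≤ rayleighSup B W :=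
    le_csSup bddAbove_form_unitSphere
      ⟨_, W.smul_mem _ hx, by simp [norm_smul, hx0], rfl⟩
  calc B x x = B (‖x‖⁻¹ • x) (‖x‖⁻¹ • x) * ‖x‖ ^ 2 := by
        simp only [map_smul, LinearMap.smul_apply, smul_eq_mul]
        field_simp
    _ ≤ _ := by gcongr

theorem exists_mem_norm_eq_one (hW : W ≠ ⊥) : ∃ x ∈ W, ‖x‖ = 1 := by
  obtain ⟨x, hxW, hx0⟩ := W.exists_mem_ne_zero_of_ne_bot hW
  exact ⟨‖x‖⁻¹ • x, W.smul_mem _ hxW, by simp [norm_smul, hx0]⟩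

theorem rayleighSup_le {a : ℝ} (hW : W ≠ ⊥) (h : ∀ x ∈ W, B x x ≤ a * ‖x‖ ^ 2) :
    rayleighSup B W ≤ a := by
  obtain ⟨x, hxW, hx⟩ := exists_mem_norm_eq_one hW
  refine csSup_le ⟨_, x, hxW, hx, rfl⟩ ?_
  rintro _ ⟨y, hyW, hy, rfl⟩
  simpa [hy] using h y hyW

theorem le_rayleighSup [FiniteDimensional ℝ W] {c : ℝ} (hW : W ≠ ⊥)
    (h : ∀ x, c * ‖x‖ ^ 2 ≤ B x x) : c ≤ rayleighSup B W := by
  obtain ⟨x, hxW, hx⟩ := exists_mem_norm_eq_one hW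
  exact le_csSup_of_le bddAbove_form_unitSphere ⟨x, hxW, hx, rfl⟩ (by simpa [hx] using h x)

theorem minMaxValue_le {c a : ℝ} (hc : ∀ x, c * ‖x‖ ^ 2 ≤ B x x) {n : ℕ} (hn : 0 < n)
    (hW : Module.finrank ℝ W = n) (h : ∀ x ∈ W, B x x ≤ a * ‖x‖ ^ 2) : minMaxValue B n ≤ a := by
  have hne {W : Submodule ℝ H} (hW : Module.finrank ℝ W = n) : W ≠ ⊥ := by
    rintro rfl
    rw [finrank_bot] at hW
    omega
  refine csInf_le_of_le ⟨c, ?_⟩ ⟨W, hW, rfl⟩ (rayleighSup_le (hne hW) h)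
  rintro _ ⟨W', hW', rfl⟩
  have : FiniteDimensional ℝ W' := .of_finrank_pos (hW'.symm ▸ hn)
  exact le_rayleighSup (hne hW') hc

theorem exists_finrank_eq_of_minMaxValue_lt {a : ℝ} {n : ℕ} (hn : 0 < n)
    (hW : ∃ W : Submodule ℝ H, Module.finrank ℝ W = n) (ha : minMaxValue B n < a) :
    ∃ W : Submodule ℝ H, Module.finrank ℝ W = n ∧ ∀ x ∈ W, x ≠ 0 → B x x < a * ‖x‖ ^ 2 := by
  obtain ⟨W₀, hW₀⟩ := hW
  obtain ⟨_, ⟨W, hW, rfl⟩, hlt⟩ := exists_lt_of_csInf_lt (by exact ⟨_, W₀, hW₀, rfl⟩) ha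
  have : FiniteDimensional ℝ W := .of_finrank_pos (hW.symm ▸ hn)
  refine ⟨W, hW, fun x hx hx0 => (form_le_rayleighSup_mul_sq hx).trans_lt ?_⟩
  gcongr

end RayleighSup

section Orthonormal

variable {H ι : Type*} [NormedAddCommGroup H] [InnerProductSpace ℝ H] [Fintype ι] {v : ι → H}

theorem norm_sq_sum_smul_of_orthonormal (hv : Orthonormal ℝ v) (c : ι → ℝ) :
    ‖∑ k, c k • v k‖ ^ 2 = ∑ k, c k ^ 2 := by
  rw [← real_inner_self_eq_norm_sq, hv.inner_sum]
  simp [sq]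

theorem starProjection_eq_sum_of_orthonormal (hv : Orthonormal ℝ v) {U : Submodule ℝ H}
    [U.HasOrthogonalProjection] (hU : Submodule.span ℝ (Set.range v) = U) (x : H) :
    U.starProjection x = ∑ k, ⟪v k, x⟫ • v k := by
  subst hU
  have hmem : ∑ k, ⟪v k, x⟫ • v k ∈ Submodule.span ℝ (Set.range v) :=
    (Submodule.mem_span_range_iff_exists_fun ℝ).2 ⟨_, rfl⟩
  refine Submodule.eq_starProjection_of_mem_of_inner_eq_zero hmem fun w hw => ?_
  induction hw using Submodule.span_induction with
  | mem _ h =>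
    obtain ⟨k, rfl⟩ := h
    rw [inner_sub_left, real_inner_comm, real_inner_comm (v k), hv.inner_right_fintype, sub_self]
  | zero => exact inner_zero_right _
  | add _ _ _ _ hx hy => rw [inner_add_right, hx, hy, add_zero]
  | smul _ _ _ hx => rw [inner_smul_right, hx, mul_zero]

end Orthonormal

section OrthogonalChangeOfBasis

variable {E ι : Type*} [AddCommGroup E] [Module ℝ E] [Fintype ι]

theorem bilinForm_sum_smul_eq (B : LinearMap.BilinForm ℝ E) (e : ι → E) (P : Matrix ι ι ℝ)
    (k l : ι) :
    B (∑ i, P i k • e i) (∑ i, P i l • e i)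
      = (Pᵀ * Matrix.of (fun k l => B (e k) (e l)) * P) k l := by
  simp only [map_sum, map_smul, LinearMap.sum_apply, LinearMap.smul_apply, smul_eq_mul,
    Matrix.mul_apply, Matrix.transpose_apply, Matrix.of_apply, Finset.sum_mul, Finset.mul_sum]
  exact Finset.sum_congr rfl fun i _ => Finset.sum_congr rfl fun i' _ => by ring

theorem span_range_sum_smul_eq [DecidableEq ι] {P : Matrix ι ι ℝ} (hP : P * Pᵀ = 1)
    (e : ι → E) :
    Submodule.span ℝ (Set.range fun k => ∑ i, P i k • e i) = Submodule.span ℝ (Set.range e) := by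
  have hmem (f : ι → E) (c : ι → ℝ) : ∑ i, c i • f i ∈ Submodule.span ℝ (Set.range f) :=
    (Submodule.mem_span_range_iff_exists_fun ℝ).2 ⟨c, rfl⟩
  have hinv (l : ι) : e l = ∑ k, P l k • ∑ i, P i k • e i := by
    have hrow (i : ι) : ∑ k, P l k * P i k = (1 : Matrix ι ι ℝ) l i := by
      rw [← hP, Matrix.mul_apply]; rfl
    simp only [Finset.smul_sum, smul_smul]
    rw [Finset.sum_comm]
    simp [← Finset.sum_smul, hrow, Matrix.one_apply]
  apply le_antisymm <;> rw [Submodule.span_le, Set.range_subset_iff] <;> intro l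
  · exact hmem e _
  · rw [hinv l]
    exact hmem _ _

end OrthogonalChangeOfBasis

section RitzSystem

variable {H : Type*} [NormedAddCommGroup H] [InnerProductSpace ℝ H]
  {B : LinearMap.BilinForm ℝ H} {U : Submodule ℝ H} {m : ℕ} {v : Fin m → H} {d : Fin m → ℝ}

/-- A Ritz system for the form `B` on the trial space `U`: an orthonormal basis `v` of `U` in
which `B` is diagonal. The diagonal entries `d`, the Ritz values, are listed in increasing order. -/
structure IsRitzSystem (B : LinearMap.BilinForm ℝ H) (U : Submodule ℝ H) (v : Fin m → H)
    (d : Fin m → ℝ) : Prop where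
  orthonormal : Orthonormal ℝ v
  span_eq : Submodule.span ℝ (Set.range v) = U
  form_apply : ∀ k l, B (v k) (v l) = if k = l then d k else 0
  monotone : Monotone d

namespace IsRitzSystem

theorem of_diagonalization {e : Fin m → H} (he : Orthonormal ℝ e) {P : Matrix (Fin m) (Fin m) ℝ}
    (hP : P * Pᵀ = 1)
    (hB : Matrix.of (fun k l => B (e k) (e l)) = P * Matrix.diagonal d * Pᵀ) (hd : Monotone d) :
    IsRitzSystem B (Submodule.span ℝ (Set.range e)) (fun k => ∑ i, P i k • e i) d := by
  have hP' : Pᵀ * P = 1 := mul_eq_one_comm.1 hP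
  refine ⟨orthonormal_iff_ite.2 fun k l => ?_, span_range_sum_smul_eq hP e, fun k l => ?_, hd⟩
  · have hone : Matrix.of (fun k l => innerₗ H (e k) (e l)) = (1 : Matrix (Fin m) (Fin m) ℝ) :=
      Matrix.ext fun k l => orthonormal_iff_ite.1 he k l
    rw [← innerₗ_apply_apply, bilinForm_sum_smul_eq, hone, mul_one, hP', Matrix.one_apply]
  · have hdiag : Pᵀ * (P * Matrix.diagonal d * Pᵀ) * P = Matrix.diagonal d := by
      calc Pᵀ * (P * Matrix.diagonal d * Pᵀ) * P = Pᵀ * P * Matrix.diagonal d * (Pᵀ * P) := by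
            simp only [Matrix.mul_assoc]
        _ = Matrix.diagonal d := by rw [hP', one_mul, mul_one]
    rw [bilinForm_sum_smul_eq, hB, hdiag, Matrix.diagonal_apply]

theorem form_sum (h : IsRitzSystem B U v d) (c : Fin m → ℝ) :
    B (∑ k, c k • v k) (∑ k, c k • v k) = ∑ k, d k * c k ^ 2 := by
  simp only [map_sum, map_smul, LinearMap.sum_apply, LinearMap.smul_apply, smul_eq_mul,
    h.form_apply, mul_ite, mul_zero, Finset.sum_ite_eq', Finset.mem_univ, if_true]
  exact Finset.sum_congr rfl fun k _ => by ring

theorem minMaxValue_le (h : IsRitzSystem B U v d) {c : ℝ} (hc : ∀ x, c * ‖x‖ ^ 2 ≤ B x x)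
    (j : Fin m) : minMaxValue B (j + 1) ≤ d j := by
  let w : Fin (j + 1) → H := fun k => v (k.castLE j.2)
  have hw : IsRitzSystem B (Submodule.span ℝ (Set.range w)) w fun k => d (k.castLE j.2) :=
    ⟨h.orthonormal.comp _ (Fin.castLE_injective j.2), rfl,
      fun k l => by simp [w, h.form_apply, Fin.ext_iff],
      h.monotone.comp (Fin.strictMono_castLE j.2).monotone⟩
  have hrank := finrank_span_eq_card hw.orthonormal.linearIndependent
  refine _root_.minMaxValue_le hc j.val.succ_pos (hrank.trans (Fintype.card_fin _)) fun x hx => ?_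
  obtain ⟨a, rfl⟩ := (Submodule.mem_span_range_iff_exists_fun ℝ).1 hx
  rw [hw.form_sum, norm_sq_sum_smul_of_orthonormal hw.orthonormal, Finset.mul_sum]
  gcongr with k
  exact h.monotone (Fin.le_def.2 (by simpa using k.is_le))

theorem lt_of_form_starProjection_lt [U.HasOrthogonalProjection] (h : IsRitzSystem B U v d)
    {W : Submodule ℝ H} {j : Fin m} {a : ℝ} (hW : Module.finrank ℝ W = j + 1)
    (hlt : ∀ x ∈ W, x ≠ 0 →
      B (U.starProjection x) (U.starProjection x) < a * ‖U.starProjection x‖ ^ 2) :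
    d j < a := by
  have : FiniteDimensional ℝ W := .of_finrank_pos (hW.symm ▸ j.val.succ_pos)
  -- For dimension reasons `W` contains some `x ≠ 0` orthogonal to `v 0, …, v (j - 1)`.
  let coords : W →ₗ[ℝ] (Fin j → ℝ) :=
    LinearMap.pi fun k => (innerₗ H (v (k.castLE j.2.le))).domRestrict W
  obtain ⟨x, hxker, hx0⟩ := coords.ker.exists_mem_ne_zero_of_ne_bot
    (LinearMap.ker_ne_bot_of_finrank_lt (by simp [hW]))
  have hcoord (k : Fin m) (hk : k < j) : ⟪v k, (x : H)⟫ = 0 :=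
    congr_fun hxker ⟨k, hk⟩
  have hx := hlt x x.2 (by simpa using hx0)
  rw [starProjection_eq_sum_of_orthonormal h.orthonormal h.span_eq, h.form_sum,
    norm_sq_sum_smul_of_orthonormal h.orthonormal, Finset.mul_sum] at hx
  obtain ⟨k, -, hk⟩ := Finset.exists_lt_of_sum_lt hx
  have hjk : j ≤ k := le_of_not_gt fun hkj => by simp [hcoord k hkj] at hk
  exact (h.monotone hjk).trans_lt (lt_of_mul_lt_mul_right hk (sq_nonneg _))

end IsRitzSystem

theorem tendsto_ritzValue {B : LinearMap.BilinForm ℝ H} {c : ℝ} (hc : ∀ x, c * ‖x‖ ^ 2 ≤ B x x)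
    {U : ℕ → Submodule ℝ H} [∀ m, (U m).HasOrthogonalProjection]
    (hU : ∀ x, Tendsto (fun m => (U m).starProjection x) atTop (𝓝 x))
    (hB : ∀ x y, Tendsto (fun m => B ((U m).starProjection x) ((U m).starProjection y)) atTop
      (𝓝 (B x y)))
    {v : ∀ m, Fin m → H} {d : ∀ m, Fin m → ℝ} (h : ∀ m, IsRitzSystem B (U m) (v m) (d m)) (j : ℕ) :
    Tendsto (fun k => d (j + 1 + k) ((Fin.last j).castAdd k)) atTop
      (𝓝 (minMaxValue B (j + 1))) := by
  refine tendsto_order.2 ⟨fun a ha => .of_forall fun k => ha.trans_le ?_, fun a ha => ?_⟩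
  · exact (h _).minMaxValue_le hc ((Fin.last j).castAdd k)
  have hdim : ∃ W : Submodule ℝ H, Module.finrank ℝ W = j + 1 :=
    ⟨_, (finrank_span_eq_card (h (j + 1)).orthonormal.linearIndependent).trans (Fintype.card_fin _)⟩
  obtain ⟨W, hW, hlt⟩ := exists_finrank_eq_of_minMaxValue_lt j.succ_pos hdim ha
  have : FiniteDimensional ℝ W := .of_finrank_pos (hW.symm ▸ j.succ_pos)
  let C : LinearMap.BilinForm ℝ H := B - a • innerₗ H
  have hC (x : H) : C x x < 0 ↔ B x x < a * ‖x‖ ^ 2 := by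
    simp [C]
  let p (m : ℕ) : W →ₗ[ℝ] H := (U m).starProjection.toLinearMap.domRestrict W
  have hlim (x y : W) : Tendsto (fun m => C.compl₁₂ (p m) (p m) x y) atTop
      (𝓝 (C.domRestrict₁₂ W W x y)) :=
    (hB x y).sub (((hU x).inner (hU y)).const_mul a)
  have hneg : ∀ᶠ m in atTop, ∀ x : W, x ≠ 0 → C.compl₁₂ (p m) (p m) x x < 0 :=
    eventually_forall_neg_of_tendsto hlim fun x hx => (hC x).2 (hlt x x.2 (by simpa using hx))
  filter_upwards [(tendsto_add_atTop_nat (j + 1)).eventually hneg] with k hk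
  rw [add_comm k] at hk
  exact (h _).lt_of_form_starProjection_lt hW fun x hx hx0 =>
    (hC _).1 (hk ⟨x, hx⟩ (by simpa using hx0))

end RitzSystem

section Galerkin

variable {H : Type*} [NormedAddCommGroup H] [InnerProductSpace ℝ H]

/-- The form `(x, y) ↦ ⟪x, T y⟫ - b x y` of an operator `T` perturbed by a bounded form `b`. -/
def perturbedForm (T : H →ₗ[ℝ] H) (b : H →L[ℝ] H →L[ℝ] ℝ) : LinearMap.BilinForm ℝ H :=
  (innerₗ H).compl₂ T - b.toLinearMap₁₂

theorem perturbedForm_apply (T : H →ₗ[ℝ] H) (b : H →L[ℝ] H →L[ℝ] ℝ) (x y : H) :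
    perturbedForm T b x y = ⟪x, T y⟫ - b x y :=
  rfl

theorem neg_norm_mul_sq_le_perturbedForm {T : H →ₗ[ℝ] H} (hT : T.IsPositive)
    (b : H →L[ℝ] H →L[ℝ] ℝ) (x : H) : -‖b‖ * ‖x‖ ^ 2 ≤ perturbedForm T b x x := by
  have hb : b x x ≤ ‖b‖ * ‖x‖ * ‖x‖ := (le_abs_self _).trans (b.le_opNorm₂ x x)
  rw [perturbedForm_apply]
  linarith [hT.inner_nonneg_right x]

theorem starProjection_apply_comm_of_isSymmetric {T : H →ₗ[ℝ] H} (hT : T.IsSymmetric)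
    {U : Submodule ℝ H} [U.HasOrthogonalProjection] (hU : U ∈ Module.End.invtSubmodule T) (x : H) :
    U.starProjection (T x) = T (U.starProjection x) := by
  have hmem : T (U.starProjection x) ∈ U := hU (U.starProjection_apply_mem x)
  refine Submodule.eq_starProjection_of_mem_of_inner_eq_zero hmem fun y hy => ?_
  rw [← map_sub, hT, U.starProjection_inner_eq_zero x _ (hU hy)]

theorem span_range_mem_invtSubmodule {ι : Type*} {T : H →ₗ[ℝ] H} {e : ι → H} {α : ι → ℝ}
    (hTe : ∀ i, T (e i) = α i • e i) :
    Submodule.span ℝ (Set.range e) ∈ Module.End.invtSubmodule T := by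
  rw [Module.End.mem_invtSubmodule, Submodule.span_le]
  rintro _ ⟨i, rfl⟩
  rw [SetLike.mem_coe, Submodule.mem_comap, hTe]
  exact Submodule.smul_mem _ _ (Submodule.subset_span ⟨i, rfl⟩)

/-- The trial space spanned by the first `m` vectors of the sequence `e`. -/
def trialSpace (e : ℕ → H) (m : ℕ) : Submodule ℝ H :=
  Submodule.span ℝ (Set.range fun i : Fin m => e i)

instance (e : ℕ → H) (m : ℕ) : FiniteDimensional ℝ (trialSpace e m) :=
  FiniteDimensional.span_of_finite ℝ (Set.finite_range _)

theorem trialSpace_mono (e : ℕ → H) : Monotone (trialSpace e) := fun _ _ hmn =>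
  Submodule.span_mono (Set.range_subset_iff.2 fun i => ⟨i.castLE hmn, rfl⟩)

theorem iSup_trialSpace (e : ℕ → H) : ⨆ m, trialSpace e m = Submodule.span ℝ (Set.range e) := by
  refine le_antisymm (iSup_le fun m => Submodule.span_mono ?_)
    (Submodule.span_le.2 (Set.range_subset_iff.2 fun i => ?_))
  · exact Set.range_subset_iff.2 fun i => ⟨i, rfl⟩
  · exact Submodule.mem_iSup_of_mem (i + 1) (Submodule.subset_span ⟨Fin.last i, rfl⟩)

theorem tendsto_starProjection_trialSpace {e : ℕ → H}
    (hspan : Dense (Submodule.span ℝ (Set.range e) : Set H)) (x : H) :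
    Tendsto (fun m => (trialSpace e m).starProjection x) atTop (𝓝 x) :=
  Submodule.starProjection_tendsto_self _ (trialSpace_mono e) x <| by
    rw [iSup_trialSpace, Submodule.dense_iff_topologicalClosure_eq_top.1 hspan]

theorem tendsto_galerkin_eigenvalue {T : H →ₗ[ℝ] H} (hT : T.IsPositive) (b : H →L[ℝ] H →L[ℝ] ℝ)
    {e : ℕ → H} (he : Orthonormal ℝ e) (hspan : Dense (Submodule.span ℝ (Set.range e) : Set H))
    {α : ℕ → ℝ} (hTe : ∀ i, T (e i) = α i • e i) {d : ∀ m, Fin m → ℝ} (hd : ∀ m, Monotone (d m))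
    (hdiag : ∀ m, ∃ P : Matrix (Fin m) (Fin m) ℝ, P * Pᵀ = 1 ∧
      Matrix.of (fun k l : Fin m => perturbedForm T b (e k) (e l)) = P * Matrix.diagonal (d m) * Pᵀ)
    (j : ℕ) :
    Tendsto (fun k => d (j + 1 + k) ((Fin.last j).castAdd k)) atTop
      (𝓝 (minMaxValue (perturbedForm T b) (j + 1))) := by
  choose P hP hB using hdiag
  have hlim := tendsto_starProjection_trialSpace hspan
  have hcomm (m : ℕ) (x : H) :
      (trialSpace e m).starProjection (T x) = T ((trialSpace e m).starProjection x) :=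
    starProjection_apply_comm_of_isSymmetric hT.isSymmetric (U := trialSpace e m)
      (span_range_mem_invtSubmodule fun i => hTe i) x
  have hritz (m : ℕ) : IsRitzSystem (perturbedForm T b) (trialSpace e m)
      (fun k => ∑ i, P m i k • e i) (d m) :=
    IsRitzSystem.of_diagonalization (he.comp _ Fin.val_injective) (hP m) (hB m) (hd m)
  refine tendsto_ritzValue (neg_norm_mul_sq_le_perturbedForm hT b) hlim (fun x y => ?_) hritz j
  simp only [perturbedForm_apply, ← hcomm]
  have hb := (b.continuous₂.tendsto (x, y)).comp ((hlim x).prodMk_nhds (hlim y))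
  exact ((hlim x).inner (hlim (T y))).sub hb

end Galerkin

section Segment

variable {E F : Type*} [NormedAddCommGroup E] [NormedSpace ℝ E] [NormedAddCommGroup F]
  [NormedSpace ℝ F] [CompleteSpace F] {f : E → F}

theorem integral_fderiv_segment (hf : ContDiff ℝ 1 f) (z w : E) :
    ∫ t in (0 : ℝ)..1, fderiv ℝ f (z + t • w) w = f (z + w) - f z := by
  have hderiv (t : ℝ) : HasDerivAt (fun t : ℝ => f (z + t • w)) (fderiv ℝ f (z + t • w) w) t := by
    have hline : HasDerivAt (fun t : ℝ => z + t • w) w t := by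
      simpa using ((hasDerivAt_id t).smul_const w).const_add z
    exact (hf.differentiable one_ne_zero _).hasFDerivAt.comp_hasDerivAt t hline
  have hcont : Continuous fun z => fderiv ℝ f z w :=
    (hf.continuous_fderiv one_ne_zero).clm_apply continuous_const
  rw [intervalIntegral.integral_eq_sub_of_hasDerivAt (fun t _ => hderiv t)
    ((hcont.comp (by fun_prop)).intervalIntegrable _ _)]
  simp

end Segment

section BoundedSet

variable {X F : Type*} [PseudoMetricSpace X] [ProperSpace X] [MeasurableSpace X]
  [OpensMeasurableSpace X] {μ : Measure X} [IsFiniteMeasureOnCompacts μ] [NormedAddCommGroup F]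
  {D : Set X} {f : X → F}

theorem memLp_restrict_of_isBounded (hD : Bornology.IsBounded D) (hf : Continuous f)
    (p : ENNReal) : MemLp f p (μ.restrict D) := by
  have hcompact : IsCompact (closure D) := hD.isCompact_closure
  have : IsFiniteMeasure (μ.restrict (closure D)) :=
    isFiniteMeasure_restrict.2 hcompact.measure_lt_top.ne
  obtain ⟨C, hC⟩ := hcompact.exists_bound_of_continuousOn hf.continuousOn
  have hclosure : MemLp f p (μ.restrict (closure D)) :=
    .of_bound
      (hf.continuousOn.aestronglyMeasurable_of_isCompact hcompact isClosed_closure.measurableSet) C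
      (ae_restrict_of_forall_mem isClosed_closure.measurableSet hC)
  exact hclosure.mono_measure (Measure.restrict_mono_set μ subset_closure)

theorem integrableOn_of_isBounded (hD : Bornology.IsBounded D) (hf : Continuous f) :
    IntegrableOn f D μ :=
  memLp_one_iff_integrable.1 (memLp_restrict_of_isBounded hD hf 1)

end BoundedSet

section FundamentalDomain

variable {E F : Type*} [NormedAddCommGroup E] [MeasurableSpace E] [BorelSpace E] {μ : Measure E}
  [NormedAddCommGroup F] {Λ : AddSubgroup E} [Countable Λ] {D : Set E} {f g : E → F}

theorem eq_of_ae_restrict_eq [μ.IsAddLeftInvariant] [μ.IsOpenPosMeasure]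
    (hD : IsAddFundamentalDomain Λ D μ) (hf : Continuous f) (hg : Continuous g)
    (hfper : ∀ (γ : Λ) z, f (γ +ᵥ z) = f z) (hgper : ∀ (γ : Λ) z, g (γ +ᵥ z) = g z)
    (h : f =ᵐ[μ.restrict D] g) : f = g := by
  refine (hf.ae_eq_iff_eq μ hg).1 (hD.measure_zero_of_invariant {z | f z = g z}ᶜ (fun γ => ?_) ?_)
  · ext z
    rw [Set.mem_vadd_set_iff_neg_vadd_mem]
    simp [hfper, hgper]
  · exact (Measure.restrict_apply₀' hD.nullMeasurableSet).symm.trans h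

variable [NormedSpace ℝ F]

theorem setIntegral_comp_add_right [μ.IsAddLeftInvariant]
    (hD : IsAddFundamentalDomain Λ D μ) (hf : ∀ (γ : Λ) z, f (γ +ᵥ z) = f z) (w : E) :
    ∫ z in D, f (z + w) ∂μ = ∫ z in D, f z ∂μ := by
  have htranslate : ∫ z in w +ᵥ D, f z ∂μ = ∫ z in D, f (w + z) ∂μ :=
    (measurePreserving_add_left μ w).setIntegral_image_emb (measurableEmbedding_addLeft w) f D
  simp only [add_comm _ w]
  rw [← htranslate]
  exact (hD.vadd_of_comm w).setIntegral_eq hD hf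

/- By periodicity, `∫ ∂_w f` is unchanged when `∂_w f` is averaged over the segments from `z` to
`z + w`; that average is `f (z + w) - f z`. -/
theorem setIntegral_fderiv_eq_zero [NormedSpace ℝ E] [FiniteDimensional ℝ E] [CompleteSpace F]
    [μ.IsAddHaarMeasure] (hD : IsAddFundamentalDomain Λ D μ) (hb : Bornology.IsBounded D)
    (hf : ContDiff ℝ 1 f) (hper : ∀ (γ : Λ) z, f (γ +ᵥ z) = f z) (w : E) :
    ∫ z in D, fderiv ℝ f z w ∂μ = 0 := by
  have : ProperSpace E := FiniteDimensional.proper_real E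
  have hcont : Continuous fun z => fderiv ℝ f z w :=
    (hf.continuous_fderiv one_ne_zero).clm_apply continuous_const
  have hper' (γ : Λ) (z : E) : fderiv ℝ f (γ +ᵥ z) w = fderiv ℝ f z w := by
    rw [AddSubgroup.vadd_def, vadd_eq_add, ← fderiv_comp_add_left]
    congr 2
    exact funext (hper γ)
  have hFubini : Integrable (Function.uncurry fun (t : ℝ) (z : E) => fderiv ℝ f (z + t • w) w)
      ((volume.restrict (Set.uIoc 0 1)).prod (μ.restrict D)) := by
    have huncurry : Continuous (Function.uncurry fun (t : ℝ) z => fderiv ℝ f (z + t • w) w) :=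
      hcont.comp (by fun_prop)
    rw [Measure.prod_restrict]
    exact integrableOn_of_isBounded ((Metric.isBounded_Ioc _ _).prod hb) huncurry
  have htranslate : IntegrableOn (fun z => f (z + w)) D μ :=
    integrableOn_of_isBounded hb (hf.continuous.comp (continuous_add_const w))
  calc ∫ z in D, fderiv ℝ f z w ∂μ
      = ∫ t in (0 : ℝ)..1, ∫ z in D, fderiv ℝ f (z + t • w) w ∂μ := by
        simp [setIntegral_comp_add_right (f := fun z => fderiv ℝ f z w) hD hper']
    _ = ∫ z in D, f (z + w) - f z ∂μ := by
        rw [intervalIntegral_integral_swap hFubini]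
        simp only [integral_fderiv_segment hf]
    _ = 0 := by
        rw [integral_sub htranslate (integrableOn_of_isBounded hb hf.continuous),
          setIntegral_comp_add_right hD hper, sub_self]

end FundamentalDomain

section Lattice

variable {v₁ v₂ : ℝ × ℝ} {f : ℝ × ℝ → ℝ}

/-- The lattice `ℤ v₁ + ℤ v₂`. -/
def lattice (v₁ v₂ : ℝ × ℝ) : AddSubgroup (ℝ × ℝ) :=
  (Submodule.span ℤ (Set.range ![v₁, v₂])).toAddSubgroup

instance : Countable (lattice v₁ v₂) :=
  inferInstanceAs (Countable (Submodule.span ℤ (Set.range ![v₁, v₂])))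

theorem LatPeriodic.vadd_eq (hf : LatPeriodic v₁ v₂ f) (γ : lattice v₁ v₂) (z : ℝ × ℝ) :
    f (γ +ᵥ z) = f z := by
  have hγ : (γ : ℝ × ℝ) ∈ Submodule.span ℤ (Set.range ![v₁, v₂]) := γ.2
  rw [Matrix.range_cons_cons_empty] at hγ
  obtain ⟨a, b, hab⟩ := Submodule.mem_span_pair.1 hγ
  have h₁ : Function.Periodic f v₁ := fun z => (hf z).1
  have h₂ : Function.Periodic f v₂ := fun z => (hf z).2
  rw [AddSubgroup.vadd_def, vadd_eq_add, add_comm, ← hab, ← add_assoc, h₂.zsmul, h₁.zsmul]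

theorem fundDom_eq_fundamentalDomain (h : LinearIndependent ℝ ![v₁, v₂]) :
    fundDom v₁ v₂ =
      ZSpan.fundamentalDomain (basisOfLinearIndependentOfCardEqFinrank h (by simp)) := by
  set b := basisOfLinearIndependentOfCardEqFinrank h (by simp)
  have hb : ⇑b = ![v₁, v₂] := coe_basisOfLinearIndependentOfCardEqFinrank h (by simp)
  ext z
  simp only [ZSpan.mem_fundamentalDomain, Fin.forall_fin_two]
  constructor
  · rintro ⟨s, t, hs, ht, rfl⟩
    have h0 : v₁ = b 0 := by simp [hb]
    have h1 : v₂ = b 1 := by simp [hb]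
    simpa [h0, h1] using ⟨hs, ht⟩
  · rintro ⟨hs, ht⟩
    refine ⟨_, _, hs, ht, ?_⟩
    conv_lhs => rw [← b.sum_repr z]
    simp [Fin.sum_univ_two, hb]

theorem isAddFundamentalDomain_fundDom (h : LinearIndependent ℝ ![v₁, v₂]) :
    IsAddFundamentalDomain (lattice v₁ v₂) (fundDom v₁ v₂) volume := by
  have := ZSpan.isAddFundamentalDomain (basisOfLinearIndependentOfCardEqFinrank h (by simp)) volume
  rw [← fundDom_eq_fundamentalDomain, coe_basisOfLinearIndependentOfCardEqFinrank] at this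
  exact this

theorem isBounded_fundDom (v₁ v₂ : ℝ × ℝ) : Bornology.IsBounded (fundDom v₁ v₂) := by
  have hcompact : IsCompact ((fun p : ℝ × ℝ => p.1 • v₁ + p.2 • v₂) ''
      Set.Icc (0 : ℝ) 1 ×ˢ Set.Icc (0 : ℝ) 1) :=
    (isCompact_Icc.prod isCompact_Icc).image (by fun_prop)
  refine hcompact.isBounded.subset ?_
  rintro _ ⟨s, t, hs, ht, rfl⟩
  exact ⟨(s, t), ⟨Set.Ico_subset_Icc_self hs, Set.Ico_subset_Icc_self ht⟩, rfl⟩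

end Lattice

section TorusFunction

variable {v₁ v₂ : ℝ × ℝ}

/-- The set `SmoothPer v₁ v₂` of smooth periodic functions as a subspace of all functions. -/
def smoothPerSubmodule (v₁ v₂ : ℝ × ℝ) : Submodule ℝ (ℝ × ℝ → ℝ) where
  carrier := SmoothPer v₁ v₂
  zero_mem' := ⟨contDiff_const, fun _ => ⟨rfl, rfl⟩⟩
  add_mem' hf hg := ⟨hf.1.add hg.1, fun z => by
    simp [(hf.2 z).1, (hf.2 z).2, (hg.2 z).1, (hg.2 z).2]⟩
  smul_mem' c f hf := ⟨hf.1.const_smul c, fun z => by simp [(hf.2 z).1, (hf.2 z).2]⟩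

/-- The smooth periodic functions, as the domain of the operator. This is a type synonym, so that
it can carry the `L²` norm over `fundDom v₁ v₂` instead of the topology of pointwise convergence. -/
def TorusFunction (v₁ v₂ : ℝ × ℝ) : Type :=
  smoothPerSubmodule v₁ v₂

namespace TorusFunction

instance : AddCommGroup (TorusFunction v₁ v₂) :=
  inferInstanceAs (AddCommGroup (smoothPerSubmodule v₁ v₂))

instance : Module ℝ (TorusFunction v₁ v₂) :=
  inferInstanceAs (Module ℝ (smoothPerSubmodule v₁ v₂))

/-- The inclusion of the smooth periodic functions into all functions. -/
def toFun : TorusFunction v₁ v₂ →ₗ[ℝ] (ℝ × ℝ → ℝ) :=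
  (smoothPerSubmodule v₁ v₂).subtype

instance : CoeFun (TorusFunction v₁ v₂) fun _ => ℝ × ℝ → ℝ :=
  ⟨fun f => toFun f⟩

theorem toFun_injective : Function.Injective (toFun : TorusFunction v₁ v₂ →ₗ[ℝ] _) :=
  Subtype.val_injective

theorem range_toFun :
    LinearMap.range (toFun : TorusFunction v₁ v₂ →ₗ[ℝ] _) = smoothPerSubmodule v₁ v₂ :=
  Submodule.range_subtype _

theorem contDiff (f : TorusFunction v₁ v₂) : ContDiff ℝ (⊤ : ℕ∞) f := f.2.1

theorem continuous (f : TorusFunction v₁ v₂) : Continuous f := f.contDiff.continuous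

theorem differentiable (f : TorusFunction v₁ v₂) : Differentiable ℝ f :=
  f.contDiff.differentiable (by simp)

theorem latPeriodic (f : TorusFunction v₁ v₂) : LatPeriodic v₁ v₂ f := f.2.2

theorem memLp (f : TorusFunction v₁ v₂) (p : ENNReal) :
    MemLp f p (volume.restrict (fundDom v₁ v₂)) :=
  memLp_restrict_of_isBounded (isBounded_fundDom v₁ v₂) f.continuous p

/-- The derivative of a smooth periodic function in the direction `w`. -/
def dirDeriv (w : ℝ × ℝ) : TorusFunction v₁ v₂ →ₗ[ℝ] TorusFunction v₁ v₂ where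
  toFun f :=
    ⟨fun z => fderiv ℝ f z w,
      (f.contDiff.fderiv_right (m := (⊤ : ℕ∞)) (by simp)).clm_apply contDiff_const,
      fun z => by simp only [← fderiv_comp_add_right, f.latPeriodic _, and_self]⟩
  map_add' f g := toFun_injective <| funext fun z => DFunLike.congr_fun
    (fderiv_add (f.differentiable z) (g.differentiable z)) w
  map_smul' c f := toFun_injective <| funext fun z => DFunLike.congr_fun
    (fderiv_const_smul (f.differentiable z) c) w

theorem dirDeriv_apply (w : ℝ × ℝ) (f : TorusFunction v₁ v₂) (z : ℝ × ℝ) :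
    dirDeriv w f z = fderiv ℝ f z w :=
  rfl

/-- The operator `-Δ` on smooth periodic functions. -/
def negLaplacian : TorusFunction v₁ v₂ →ₗ[ℝ] TorusFunction v₁ v₂ :=
  -(dirDeriv (1, 0) ∘ₗ dirDeriv (1, 0) + dirDeriv (0, 1) ∘ₗ dirDeriv (0, 1))

theorem deriv_fst (f : TorusFunction v₁ v₂) (x y : ℝ) :
    deriv (fun x' => f (x', y)) x = dirDeriv (1, 0) f (x, y) :=
  ((f.differentiable (x, y)).hasFDerivAt.comp_hasDerivAt x
    ((hasDerivAt_id x).prodMk (hasDerivAt_const x y))).deriv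

theorem deriv_snd (f : TorusFunction v₁ v₂) (x y : ℝ) :
    deriv (fun y' => f (x, y')) y = dirDeriv (0, 1) f (x, y) :=
  ((f.differentiable (x, y)).hasFDerivAt.comp_hasDerivAt y
    ((hasDerivAt_const y x).prodMk (hasDerivAt_id y))).deriv

theorem negLaplacian_apply (f : TorusFunction v₁ v₂) (z : ℝ × ℝ) :
    negLaplacian f z = -lap f z := by
  simp only [lap, deriv_fst, deriv_snd]
  rfl

/-- The class of a smooth periodic function in `L²` of the fundamental parallelogram. -/
def toL2 : TorusFunction v₁ v₂ →ₗ[ℝ] Lp ℝ 2 (volume.restrict (fundDom v₁ v₂)) where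
  toFun f := (f.memLp 2).toLp f
  map_add' f g := MemLp.toLp_add (f.memLp 2) (g.memLp 2)
  map_smul' c f := MemLp.toLp_const_smul c (f.memLp 2)

theorem coeFn_toL2 (f : TorusFunction v₁ v₂) : toL2 f =ᵐ[volume.restrict (fundDom v₁ v₂)] f :=
  (f.memLp 2).coeFn_toLp

theorem toL2_injective (h : LinearIndependent ℝ ![v₁, v₂]) :
    Function.Injective (toL2 : TorusFunction v₁ v₂ →ₗ[ℝ] _) := fun f g hfg =>
  toFun_injective <| eq_of_ae_restrict_eq (isAddFundamentalDomain_fundDom h) f.continuous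
    g.continuous f.latPeriodic.vadd_eq g.latPeriodic.vadd_eq
    ((MemLp.toLp_eq_toLp_iff (f.memLp 2) (g.memLp 2)).1 hfg)

variable [h : Fact (LinearIndependent ℝ ![v₁, v₂])]

instance : NormedAddCommGroup (TorusFunction v₁ v₂) :=
  NormedAddCommGroup.induced _ _ toL2 (toL2_injective h.out)

instance : InnerProductSpace ℝ (TorusFunction v₁ v₂) :=
  InnerProductSpace.induced toL2

/-- `toL2` as an isometry; the norm on `TorusFunction v₁ v₂` is pulled back along it. -/
def toL2ₗᵢ : TorusFunction v₁ v₂ →ₗᵢ[ℝ] Lp ℝ 2 (volume.restrict (fundDom v₁ v₂)) :=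
  ⟨toL2, fun _ => rfl⟩

theorem inner_eq_l2 (f g : TorusFunction v₁ v₂) : ⟪f, g⟫ = l2 v₁ v₂ f g := by
  refine integral_congr_ae ?_
  filter_upwards [coeFn_toL2 f, coeFn_toL2 g] with z hf hg
  simp [hf, hg, mul_comm]

theorem norm_sq_eq_integral (f : TorusFunction v₁ v₂) :
    ‖f‖ ^ 2 = ∫ z in fundDom v₁ v₂, f z ^ 2 := by
  rw [← real_inner_self_eq_norm_sq, inner_eq_l2]
  simp only [l2, sq]

/-- The bounded form `(f, g) ↦ ∫ V f g` of an essentially bounded potential `V`. -/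
def potentialForm (V : Lp ℝ ⊤ (volume.restrict (fundDom v₁ v₂))) :
    TorusFunction v₁ v₂ →L[ℝ] TorusFunction v₁ v₂ →L[ℝ] ℝ :=
  ((ContinuousLinearMap.mul ℝ ℝ).lpPairing _ 2 2).bilinearComp
    ((ContinuousLinearMap.mul ℝ ℝ).holderL _ ⊤ 2 2 V ∘L toL2ₗᵢ.toContinuousLinearMap)
    toL2ₗᵢ.toContinuousLinearMap

theorem potentialForm_toLp_apply {V : ℝ × ℝ → ℝ}
    (hV : MemLp V ⊤ (volume.restrict (fundDom v₁ v₂))) (f g : TorusFunction v₁ v₂) :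
    potentialForm (hV.toLp V) f g = ∫ z in fundDom v₁ v₂, V z * f z * g z := by
  refine (ContinuousLinearMap.lpPairing_eq_integral _ _ _).trans (integral_congr_ae ?_)
  filter_upwards [(ContinuousLinearMap.mul ℝ ℝ).coeFn_holder (r := 2) (hV.toLp V) (toL2 f),
    hV.coeFn_toLp, coeFn_toL2 f, coeFn_toL2 g] with z hVf hVz hf hg
  change (ContinuousLinearMap.mul ℝ ℝ).holder 2 (hV.toLp V) (toL2 f) z * toL2 g z = _
  rw [hVf, ContinuousLinearMap.mul_apply', hVz, hf, hg]

theorem inner_dirDeriv_left (w : ℝ × ℝ) (f g : TorusFunction v₁ v₂) :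
    ⟪dirDeriv w f, g⟫ = -⟪f, dirDeriv w g⟫ := by
  have hderiv (z : ℝ × ℝ) :
      fderiv ℝ (fun z => f z * g z) z w = dirDeriv w f z * g z + f z * dirDeriv w g z := by
    rw [fderiv_fun_mul (f.differentiable z) (g.differentiable z)]
    simp only [dirDeriv_apply, add_apply, smul_apply, smul_eq_mul]
    ring
  have hintegrable (f g : TorusFunction v₁ v₂) :
      IntegrableOn (fun z => f z * g z) (fundDom v₁ v₂) volume :=
    (f.memLp 2).integrable_mul (g.memLp 2)
  have hzero := setIntegral_fderiv_eq_zero (isAddFundamentalDomain_fundDom h.out)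
    (isBounded_fundDom v₁ v₂) ((f.contDiff.mul g.contDiff).of_le (by simp))
    (fun γ z => by rw [f.latPeriodic.vadd_eq, g.latPeriodic.vadd_eq]) w
  simp only [hderiv] at hzero
  rw [integral_add (hintegrable _ _) (hintegrable _ _)] at hzero
  rw [inner_eq_l2, inner_eq_l2]
  exact eq_neg_of_add_eq_zero_left hzero

theorem inner_negLaplacian_left (f g : TorusFunction v₁ v₂) :
    ⟪negLaplacian f, g⟫ =
      ⟪dirDeriv (1, 0) f, dirDeriv (1, 0) g⟫ + ⟪dirDeriv (0, 1) f, dirDeriv (0, 1) g⟫ := by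
  simp only [negLaplacian, LinearMap.neg_apply, LinearMap.add_apply, LinearMap.comp_apply,
    inner_neg_left, inner_add_left, inner_dirDeriv_left _ (dirDeriv _ f)]
  ring

theorem isPositive_negLaplacian :
    (negLaplacian : TorusFunction v₁ v₂ →ₗ[ℝ] TorusFunction v₁ v₂).IsPositive := by
  refine ⟨fun f g => ?_, fun f => ?_⟩
  · rw [inner_negLaplacian_left, real_inner_comm _ f, inner_negLaplacian_left]
    simp only [real_inner_comm]
  · rw [inner_negLaplacian_left]
    exact add_nonneg real_inner_self_nonneg real_inner_self_nonneg

variable {V : ℝ × ℝ → ℝ} (hV : MemLp V ⊤ (volume.restrict (fundDom v₁ v₂)))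

/-- The bilinear form of the operator `-Δ - V`, for an essentially bounded potential `V`. -/
def schrodingerForm : LinearMap.BilinForm ℝ (TorusFunction v₁ v₂) :=
  perturbedForm negLaplacian (potentialForm (hV.toLp V))

theorem schrodingerForm_apply (f g : TorusFunction v₁ v₂) :
    schrodingerForm hV f g = ⟪f, negLaplacian g⟫ - ∫ z in fundDom v₁ v₂, V z * f z * g z := by
  rw [schrodingerForm, perturbedForm_apply, potentialForm_toLp_apply]

theorem schrodingerForm_self (f : TorusFunction v₁ v₂) :
    schrodingerForm hV f f = Qf v₁ v₂ V f := by
  have hlap : Integrable (fun z => f z * negLaplacian f z) (volume.restrict (fundDom v₁ v₂)) :=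
    (f.memLp 2).integrable_mul ((negLaplacian f).memLp 2)
  have hpot : Integrable (fun z => V z * f z * f z) (volume.restrict (fundDom v₁ v₂)) :=
    MemLp.integrable_mul (p := 2) (q := 2) ((f.memLp 2).mul hV) (f.memLp 2)
  rw [schrodingerForm_apply, inner_eq_l2, l2, ← integral_sub hlap hpot, Qf]
  congr 1
  funext z
  rw [negLaplacian_apply]
  ring

theorem rayleighSup_schrodingerForm (W : Submodule ℝ (TorusFunction v₁ v₂)) :
    rayleighSup (schrodingerForm hV) W =
      sSup {q | ∃ φ ∈ W.map toFun, l2 v₁ v₂ φ φ = 1 ∧ q = Qf v₁ v₂ V φ} := by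
  have hnorm (f : TorusFunction v₁ v₂) : ‖f‖ = 1 ↔ l2 v₁ v₂ f f = 1 := by
    rw [← inner_eq_l2, real_inner_self_eq_norm_sq,
      pow_eq_one_iff_of_nonneg (norm_nonneg f) two_ne_zero]
  simp only [rayleighSup, Submodule.mem_map, exists_exists_and_eq_and, hnorm, schrodingerForm_self]

theorem minmax_eq_minMaxValue (n : ℕ) :
    minmax v₁ v₂ V n = minMaxValue (schrodingerForm hV) n := by
  have hfinrank (W : Submodule ℝ (TorusFunction v₁ v₂)) :
      Module.finrank ℝ (W.map toFun) = Module.finrank ℝ W :=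
    (Submodule.equivMapOfInjective _ toFun_injective W).finrank_eq.symm
  unfold minmax minMaxValue
  congr 1
  ext c
  constructor
  · rintro ⟨W, hW, hWn, rfl⟩
    have hmap : (W.comap toFun).map toFun = W :=
      Submodule.map_comap_eq_of_le (range_toFun.symm.le.trans' hW)
    exact ⟨W.comap toFun, by rw [← hfinrank, hmap, hWn], by
      rw [rayleighSup_schrodingerForm, hmap]⟩
  · rintro ⟨W, hWn, rfl⟩
    refine ⟨W.map toFun, ?_, (hfinrank W).trans hWn, rayleighSup_schrodingerForm hV W⟩
    rintro _ ⟨f, -, rfl⟩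
    exact f.2

theorem Amat_eq_schrodingerForm {u : ℕ → TorusFunction v₁ v₂} {α : ℕ → ℝ} (hu : Orthonormal ℝ u)
    (heig : ∀ i, negLaplacian (u i) = α i • u i) (m : ℕ) :
    Amat v₁ v₂ V (fun i => u i) α m =
      Matrix.of fun k l : Fin m => schrodingerForm hV (u k) (u l) := by
  ext k l
  simp only [Amat, Matrix.of_apply, schrodingerForm_apply, heig, real_inner_smul_right,
    orthonormal_iff_ite.1 hu, Fin.val_inj, mul_ite, mul_one, mul_zero]
  congr 1
  split_ifs with hkl
  · rw [hkl]
  · rfl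

theorem dense_span_of_forall_integral_lt {ι : Type*} {u : ι → TorusFunction v₁ v₂}
    (h : ∀ f : TorusFunction v₁ v₂, ∀ ε : ℝ, 0 < ε →
      ∃ g ∈ Submodule.span ℝ (Set.range fun i => (u i : ℝ × ℝ → ℝ)),
        ∫ z in fundDom v₁ v₂, (f z - g z) ^ 2 < ε) :
    Dense (Submodule.span ℝ (Set.range u) : Set (TorusFunction v₁ v₂)) := by
  refine Metric.dense_iff.2 fun f r hr => ?_
  obtain ⟨g, hg, hlt⟩ := h f (r ^ 2) (by positivity)
  rw [Set.range_comp' toFun u, Submodule.span_image] at hg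
  obtain ⟨g, hg, rfl⟩ := hg
  refine ⟨g, ?_, hg⟩
  rw [mem_ball_iff_norm']
  refine lt_of_pow_lt_pow_left₀ 2 hr.le ?_
  rwa [norm_sq_eq_integral]

end TorusFunction

end TorusFunction

theorem stmt1_general {v₁ v₂ : ℝ × ℝ} (hindep : LinearIndependent ℝ ![v₁, v₂])
    {V : ℝ × ℝ → ℝ} (hV : MemLp V ⊤ (volume.restrict (fundDom v₁ v₂)))
    {u : ℕ → ℝ × ℝ → ℝ} {α : ℕ → ℝ}
    (hsm : ∀ i, ContDiff ℝ (⊤ : ℕ∞) (u i)) (hper : ∀ i, LatPeriodic v₁ v₂ (u i))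
    (hon : ∀ i j, l2 v₁ v₂ (u i) (u j) = if i = j then 1 else 0)
    (heig : ∀ i z, -(lap (u i) z) = α i * u i z)
    (hdense : ∀ f ∈ SmoothPer v₁ v₂, ∀ ε : ℝ, 0 < ε → ∃ g ∈ Submodule.span ℝ (Set.range u),
        ∫ z in fundDom v₁ v₂, (f z - g z) ^ 2 < ε)
    {lam : (m : ℕ) → Fin m → ℝ}
    (hmono : ∀ m, Monotone (lam m))
    (hdiag : ∀ m, ∃ P : Matrix (Fin m) (Fin m) ℝ, P * P.transpose = 1 ∧
      Amat v₁ v₂ V u α m = P * Matrix.diagonal (lam m) * P.transpose)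
    (j : ℕ) :
    Tendsto (fun k : ℕ => lam (j + 1 + k) ((Fin.last j).castAdd k)) atTop
      (nhds (minmax v₁ v₂ V (j + 1))) := by
  have : Fact (LinearIndependent ℝ ![v₁, v₂]) := ⟨hindep⟩
  let e (i : ℕ) : TorusFunction v₁ v₂ := ⟨u i, hsm i, hper i⟩
  have he : Orthonormal ℝ e :=
    orthonormal_iff_ite.2 fun i k => (TorusFunction.inner_eq_l2 _ _).trans (hon i k)
  have heig' (i : ℕ) : TorusFunction.negLaplacian (e i) = α i • e i :=
    TorusFunction.toFun_injective <| funext fun z =>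
      (TorusFunction.negLaplacian_apply _ z).trans (heig i z)
  have hspan : Dense (Submodule.span ℝ (Set.range e) : Set (TorusFunction v₁ v₂)) :=
    TorusFunction.dense_span_of_forall_integral_lt fun f => hdense f f.2
  have hdiag' (m : ℕ) := TorusFunction.Amat_eq_schrodingerForm hV he heig' m ▸ hdiag m
  rw [TorusFunction.minmax_eq_minMaxValue hV]
  exact tendsto_galerkin_eigenvalue TorusFunction.isPositive_negLaplacian _ he hspan heig' hmono
    hdiag' j

/-- `lim_{m→∞} λ_j^{(m)} = β_j` (with `j` 0-based, so the limit is the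
`(j+1)`-st min-max value; the sequence is sampled at `m = j + 1 + k` so that the
`j`-th eigenvalue of `A_m` is defined). -/
theorem stmt1 (v₁ v₂ : ℝ × ℝ) (hindep : LinearIndependent ℝ ![v₁, v₂])
    (V : ℝ × ℝ → ℝ) (hVc : Continuous V) (hVp : LatPeriodic v₁ v₂ V)
    (u : ℕ → ℝ × ℝ → ℝ) (α : ℕ → ℝ)
    (hsm : ∀ i, ContDiff ℝ (⊤ : ℕ∞) (u i)) (hper : ∀ i, LatPeriodic v₁ v₂ (u i))
    (hon : ∀ i j, l2 v₁ v₂ (u i) (u j) = if i = j then 1 else 0)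
    (heig : ∀ i z, -(lap (u i) z) = α i * u i z)
    (hα : ∀ i, 0 ≤ α i)
    (hdense : ∀ f : ℝ × ℝ → ℝ, Measurable f → LatPeriodic v₁ v₂ f →
      IntegrableOn (fun z => f z ^ 2) (fundDom v₁ v₂) volume →
      ∀ ε : ℝ, 0 < ε → ∃ g ∈ Submodule.span ℝ (Set.range u),
        ∫ z in fundDom v₁ v₂, (f z - g z) ^ 2 < ε)
    (lam : (m : ℕ) → Fin m → ℝ)
    (hmono : ∀ m, Monotone (lam m))
    (hdiag : ∀ m, ∃ P : Matrix (Fin m) (Fin m) ℝ, P * P.transpose = 1 ∧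
      Amat v₁ v₂ V u α m = P * Matrix.diagonal (lam m) * P.transpose)
    (j : ℕ) :
    Tendsto (fun k : ℕ => lam (j + 1 + k) ⟨j, by omega⟩) atTop
      (nhds (minmax v₁ v₂ V (j + 1))) := by
  have hbdd := isBounded_fundDom v₁ v₂
  exact stmt1_general hindep (memLp_restrict_of_isBounded hbdd hVc ⊤) hsm hper hon heig
    (fun f hf => hdense f hf.1.continuous.measurable hf.2
      (integrableOn_of_isBounded hbdd (hf.1.continuous.pow 2))) hmono hdiag j

end
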